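/- arXiv:math/0406397 — 2 statements merged into one kernel-verified Lean document; each statement's English description precedes it below -/
import Mathlib

section
/- For every r ≥ 0, all î, ĵ, k̂ ∈ {3, …, n+2} and all b, c, f_1, …, f_r ∈ {1, …, n+4}, one has R^î_{ĵ, b, c; f_1; …; f_r; k̂} = 0 identically on ℝ^{n+4} (covariant differentiation in any of the directions x^3, …, x^{n+2} annihilates these components). -/
/-!
The vectors `∂_{p1}, ∂_{p2}` span a parallel null distribution whose orthogonal complement is
spanned by the `∂_l` with `l ≠ q1, q2` ("vertical" directions below). In coordinates this says
`Γ^a_{bp} = Γ^a_{pb} = 0` and `Γ^q_{bc} = 0`. Moreover `Γ^î_{ĵk̂} = 0`, and each `Γ^î_{cĵ}` depends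
on `x^{n+3}` only, because the functions `u^î` are linear in the coordinates `x^ĵ`
(`chr_p_right`, `chr_p_left`, `chr_q`, `chr_ehat_vert`, `chr_inv`).

By induction on the number of covariant derivatives (`covRAux_main`), the components of
`∇^r R` vanish when the upper index is `q1` or `q2`, or the first lower index is `p1` or `p2`,
and the components with `î` above and `ĵ` as first lower index depend on `x^{n+3}` only and vanish
as soon as one of the remaining lower indices is vertical. In the inductive step all the
terms which correct a remaining lower index `b` drop out: `Γ^l_{fb}` is zero for `l = q1, q2`, and
for the other `l` the component of `∇^r R` with `l` in that slot vanishes. What remains is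
`∂_f T^î_ĵ + Σ_m Γ^î_{f m̂} T^m̂_ĵ - Σ_m Γ^m̂_{f ĵ} T^î_m̂`, which is zero for vertical `f`.
The theorem is the case where the last differentiation index is `k̂`.

For the Christoffel symbols only two kinds of rows of `G⁻¹` are needed, and these are read off from
`e_{p}ᵀ G = e_{q}ᵀ` and `(e_î - u^î e_{p2})ᵀ G = e_îᵀ` (`inv_row`). Dependence on `x^{n+3}` only is
encoded as invariance under translations, which passes to partial derivatives without
any differentiability assumption.
-/

namespace HolPaper

open Matrix

/-- Points of `ℝ^{n+4}`, with coordinates indexed by `Fin (n+4)`.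
The paper's index `1` is `p1`, `2` is `p2`, `î ∈ {3,…,n+2}` is `ehat i` for `i : Fin n`,
`n+3` is `q1` and `n+4` is `q2`. -/
abbrev Pt (n : ℕ) := Fin (n + 4) → ℝ

def p1 (n : ℕ) : Fin (n + 4) := ⟨0, by omega⟩
def p2 (n : ℕ) : Fin (n + 4) := ⟨1, by omega⟩
def ehat {n : ℕ} (i : Fin n) : Fin (n + 4) := ⟨i.1 + 2, by have := i.isLt; omega⟩
def q1 (n : ℕ) : Fin (n + 4) := ⟨n + 2, by omega⟩
def q2 (n : ℕ) : Fin (n + 4) := ⟨n + 3, by omega⟩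

noncomputable section

variable {n N : ℕ}

/-- `u^î(x) = Σ_ĵ Σ_α (A_α)_{î-2,ĵ-2} x^ĵ (x^{n+3})^α`. -/
def u (A : Fin N → Matrix (Fin n) (Fin n) ℝ) (i : Fin n) (x : Pt n) : ℝ :=
  ∑ j : Fin n, ∑ α : Fin N, A α i j * x (ehat j) * x (q1 n) ^ (α.1 + 1)

/-- `F(x) = Σ_î (x^î)²`. -/
def Fq (n : ℕ) (x : Pt n) : ℝ := ∑ i : Fin n, x (ehat i) ^ 2

/-- The Gram matrix `G(x)` of the metric. -/
def Gmet (A : Fin N → Matrix (Fin n) (Fin n) ℝ) (x : Pt n) :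
    Matrix (Fin (n + 4)) (Fin (n + 4)) ℝ := fun a b =>
  (if (a = p1 n ∧ b = q1 n) ∨ (a = q1 n ∧ b = p1 n) then (1 : ℝ) else 0)
  + (if (a = p2 n ∧ b = q2 n) ∨ (a = q2 n ∧ b = p2 n) then (1 : ℝ) else 0)
  + (∑ i : Fin n, if a = ehat i ∧ b = ehat i then (1 : ℝ) else 0)
  + (∑ i : Fin n, if (a = ehat i ∧ b = q2 n) ∨ (a = q2 n ∧ b = ehat i) then u A i x else 0)
  + (if (a = q1 n ∧ b = q1 n) ∨ (a = q2 n ∧ b = q2 n) then Fq n x else 0)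

/-- Partial derivative `∂_b f` of a function on `ℝ^{n+4}`. -/
def pd (b : Fin (n + 4)) (f : Pt n → ℝ) (x : Pt n) : ℝ :=
  fderiv ℝ f x (Pi.single b 1)

/-- Christoffel symbols
`Γ^a_{bc} = ½ Σ_d G^{ad} (∂_b G_{dc} + ∂_c G_{bd} − ∂_d G_{bc})`. -/
def Γchr (A : Fin N → Matrix (Fin n) (Fin n) ℝ) (a b c : Fin (n + 4)) (x : Pt n) : ℝ :=
  (1 / 2) * ∑ d : Fin (n + 4), (Gmet A x)⁻¹ a d *
    (pd b (fun y => Gmet A y d c) x + pd c (fun y => Gmet A y b d) x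
      - pd d (fun y => Gmet A y b c) x)

/-- Curvature components
`R^a_{b,c,d} = ∂_c Γ^a_{db} − ∂_d Γ^a_{cb} + Σ_e (Γ^a_{ce} Γ^e_{db} − Γ^a_{de} Γ^e_{cb})`. -/
def Rcurv (A : Fin N → Matrix (Fin n) (Fin n) ℝ) (a b c d : Fin (n + 4)) (x : Pt n) : ℝ :=
  pd c (Γchr A a d b) x - pd d (Γchr A a c b) x
  + ∑ e : Fin (n + 4), (Γchr A a c e x * Γchr A e d b x - Γchr A a d e x * Γchr A e c b x)

/-- Auxiliary recursion for iterated covariant derivatives of the curvature; the list of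
differentiation indices is stored in *reverse* order (most recent derivative first). -/
def covRAux (A : Fin N → Matrix (Fin n) (Fin n) ℝ) :
    Fin (n + 4) → Fin (n + 4) → Fin (n + 4) → Fin (n + 4) → List (Fin (n + 4)) → Pt n → ℝ
  | a, b, c, d, [], x => Rcurv A a b c d x
  | a, b, c, d, f :: fs, x =>
      pd f (covRAux A a b c d fs) x
      + ∑ l : Fin (n + 4), Γchr A a f l x * covRAux A l b c d fs x
      - ∑ l : Fin (n + 4), Γchr A l f b x * covRAux A a l c d fs x
      - ∑ l : Fin (n + 4), Γchr A l f c x * covRAux A a b l d fs x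
      - ∑ l : Fin (n + 4), Γchr A l f d x * covRAux A a b c l fs x
      - ∑ s : Fin fs.length, ∑ l : Fin (n + 4),
          Γchr A l f (fs.get s) x * covRAux A a b c d (fs.set s l) x
  termination_by a b c d fs => fs.length
  decreasing_by all_goals simp [List.length_set]

/-- `covR A a b c d [f_1, …, f_r] x` is the component `R^a_{b,c,d;f_1;…;f_r}(x)` of the
`r`-th covariant derivative of the curvature tensor (indices in natural order). -/
def covR (A : Fin N → Matrix (Fin n) (Fin n) ℝ) (a b c d : Fin (n + 4))
    (fs : List (Fin (n + 4))) (x : Pt n) : ℝ :=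
  covRAux A a b c d fs.reverse x

/-! ### Index bookkeeping -/

lemma idx_cases (a : Fin (n + 4)) :
    a = p1 n ∨ a = p2 n ∨ (∃ i : Fin n, a = ehat i) ∨ a = q1 n ∨ a = q2 n := by
  obtain ⟨a, ha⟩ := a
  simp only [p1, p2, q1, q2, ehat, Fin.mk.injEq]
  by_cases h : 2 ≤ a ∧ a < n + 2
  · exact Or.inr (Or.inr (Or.inl ⟨⟨a - 2, by omega⟩, by simp; omega⟩))
  · omega

/-- The vertical indices: all except `q1` and `q2`. -/
def Vert (l : Fin (n + 4)) : Prop := l ≠ q1 n ∧ l ≠ q2 n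

lemma ehat_ne_p1 (i : Fin n) : ehat i ≠ p1 n := by simp [ehat, p1]
lemma ehat_ne_p2 (i : Fin n) : ehat i ≠ p2 n := by simp [ehat, p2]
lemma ehat_ne_q1 (i : Fin n) : ehat i ≠ q1 n := by have := i.isLt; simp [ehat, q1]; omega
lemma ehat_ne_q2 (i : Fin n) : ehat i ≠ q2 n := by have := i.isLt; simp [ehat, q2]; omega
lemma p1_ne_p2 : p1 n ≠ p2 n := by simp [p1, p2]
lemma p1_ne_q1 : p1 n ≠ q1 n := by simp [p1, q1]
lemma p1_ne_q2 : p1 n ≠ q2 n := by simp [p1, q2]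
lemma p2_ne_q1 : p2 n ≠ q1 n := by simp [p2, q1]
lemma p2_ne_q2 : p2 n ≠ q2 n := by simp [p2, q2]
lemma q1_ne_q2 : q1 n ≠ q2 n := by simp [q1, q2]
lemma ehat_inj {i j : Fin n} : ehat i = ehat j ↔ i = j := by
  simp [ehat, Fin.ext_iff]

lemma vert_ehat (i : Fin n) : Vert (ehat i) := ⟨ehat_ne_q1 i, ehat_ne_q2 i⟩

/-! ### Entries of the metric and rows of its inverse -/

lemma Gmet_symm (A : Fin N → Matrix (Fin n) (Fin n) ℝ) (x : Pt n) (a b : Fin (n + 4)) :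
    Gmet A x a b = Gmet A x b a := by
  unfold Gmet
  congr 1
  · congr 1
    · congr 1
      · congr 1 <;> · congr 1; apply propext; tauto
      · refine Finset.sum_congr rfl fun i _ => ?_
        congr 1; apply propext; tauto
    · refine Finset.sum_congr rfl fun i _ => ?_
      congr 1; apply propext; tauto
  · congr 1; apply propext; tauto

lemma Gmet_p1 (A : Fin N → Matrix (Fin n) (Fin n) ℝ) (x : Pt n) (b : Fin (n + 4)) :
    Gmet A x (p1 n) b = if b = q1 n then 1 else 0 := by
  simp [Gmet, p1_ne_p2, p1_ne_q1, p1_ne_q2, (ehat_ne_p1 _).symm]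

lemma Gmet_p2 (A : Fin N → Matrix (Fin n) (Fin n) ℝ) (x : Pt n) (b : Fin (n + 4)) :
    Gmet A x (p2 n) b = if b = q2 n then 1 else 0 := by
  simp [Gmet, p1_ne_p2.symm, p2_ne_q1, p2_ne_q2, (ehat_ne_p2 _).symm]

lemma Gmet_ehat (A : Fin N → Matrix (Fin n) (Fin n) ℝ) (x : Pt n) (i : Fin n)
    (b : Fin (n + 4)) :
    Gmet A x (ehat i) b = (if b = ehat i then 1 else 0) + (if b = q2 n then u A i x else 0) := by
  simp only [Gmet, ehat_ne_p1, ehat_ne_p2, ehat_ne_q1, ehat_ne_q2, false_and, or_self, if_false,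
    or_false, ite_and, ehat_inj]
  simp

/-- A row vector `w` with `w G = e_a` is the row `a` of `G⁻¹`, since `G` is injective. -/
lemma inv_row (A : Fin N → Matrix (Fin n) (Fin n) ℝ) (x : Pt n) (a : Fin (n + 4))
    (w : Fin (n + 4) → ℝ) (hw : w ᵥ* Gmet A x = Pi.single a 1) : (Gmet A x)⁻¹ a = w := by
  have hdet : IsUnit (Gmet A x).det := by
    rw [isUnit_iff_ne_zero]
    intro h0
    obtain ⟨v, hv0, hv⟩ := Matrix.exists_mulVec_eq_zero_iff.mpr h0
    apply hv0
    have row : ∀ a, ∑ b, Gmet A x a b * v b = 0 := fun a => congrFun hv a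
    have e1 : v (q1 n) = 0 := by simpa [Gmet_p1] using row (p1 n)
    have e2 : v (q2 n) = 0 := by simpa [Gmet_p2] using row (p2 n)
    have e3 : ∀ i, v (ehat i) = 0 := fun i => by
      simpa [Gmet_ehat, add_mul, Finset.sum_add_distrib, e2] using row (ehat i)
    have hsum : ∀ a, Gmet A x a (p1 n) * v (p1 n) + Gmet A x a (p2 n) * v (p2 n) = 0 := by
      intro a
      rw [← row a, ← Finset.sum_pair (f := fun b => Gmet A x a b * v b) p1_ne_p2]
      refine Finset.sum_subset (Finset.subset_univ _) fun b _ hb => ?_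
      simp only [Finset.mem_insert, Finset.mem_singleton, not_or] at hb
      rcases idx_cases b with h | h | ⟨i, h⟩ | h | h
      · exact absurd h hb.1
      · exact absurd h hb.2
      · simp [h, e3]
      · simp [h, e1]
      · simp [h, e2]
    have e4 : v (p1 n) = 0 := by
      simpa [Gmet_symm A x (q1 n), Gmet_p1, Gmet_p2, q1_ne_q2] using hsum (q1 n)
    have e5 : v (p2 n) = 0 := by
      simpa [Gmet_symm A x (q2 n), Gmet_p1, Gmet_p2, q1_ne_q2.symm] using hsum (q2 n)
    funext b
    rcases idx_cases b with h | h | ⟨i, h⟩ | h | h <;> simp [h, e1, e2, e3, e4, e5]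
  have h := congrArg (fun z => z ᵥ* (Gmet A x)⁻¹) hw
  simp only [Matrix.vecMul_vecMul, Matrix.mul_nonsing_inv _ hdet, Matrix.vecMul_one,
    Matrix.single_one_vecMul] at h
  exact h.symm

/-! ### Partial derivatives -/

lemma pd_const (b : Fin (n + 4)) (c : ℝ) (x : Pt n) : pd b (fun _ => c) x = 0 := by
  simp [pd]

/-- Holds without differentiability, since `fderiv` is zero where it does not exist. -/
lemma pd_eq_zero_of_line (b : Fin (n + 4)) (f : Pt n → ℝ) (x : Pt n)
    (h : ∀ t : ℝ, f (x + t • Pi.single b 1) = f x) : pd b f x = 0 := by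
  unfold pd
  by_cases hf : DifferentiableAt ℝ f x
  · rw [← hf.lineDeriv_eq_fderiv]
    simp [lineDeriv, h]
  · simp [fderiv_zero_of_not_differentiableAt hf]

/-- The function depends on the coordinate `x^{n+3}` only. -/
def YInv (f : Pt n → ℝ) : Prop := ∀ x y, x (q1 n) = y (q1 n) → f x = f y

lemma YInv.pd_eq_zero {f : Pt n → ℝ} (hf : YInv f) {b : Fin (n + 4)} (hb : b ≠ q1 n)
    (x : Pt n) : pd b f x = 0 :=
  pd_eq_zero_of_line b f x fun t => hf _ _ (by simp [hb.symm])

lemma YInv.pd {f : Pt n → ℝ} (hf : YInv f) (b : Fin (n + 4)) : YInv (pd b f) := by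
  intro x y hxy
  have h : f = fun z => f (z + (y - x)) := by
    funext z
    exact hf _ _ (by simp [hxy])
  unfold HolPaper.pd
  conv_lhs => rw [h]
  rw [fderiv_comp_add_right, add_sub_cancel]

lemma YInv.zero : YInv (fun _ : Pt n => (0 : ℝ)) := fun _ _ _ => rfl

lemma YInv.add {f g : Pt n → ℝ} (hf : YInv f) (hg : YInv g) : YInv (fun x => f x + g x) :=
  fun x y h => by simp only [hf x y h, hg x y h]

lemma YInv.sub {f g : Pt n → ℝ} (hf : YInv f) (hg : YInv g) : YInv (fun x => f x - g x) :=
  fun x y h => by simp only [hf x y h, hg x y h]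

lemma YInv.mul {f g : Pt n → ℝ} (hf : YInv f) (hg : YInv g) : YInv (fun x => f x * g x) :=
  fun x y h => by simp only [hf x y h, hg x y h]

lemma YInv.sum {ι : Type*} [Fintype ι] {f : ι → Pt n → ℝ} (hf : ∀ i, YInv (f i)) :
    YInv (fun x => ∑ i, f i x) :=
  fun x y h => Finset.sum_congr rfl fun i _ => hf i x y h

lemma pd_p_Gmet (A : Fin N → Matrix (Fin n) (Fin n) ℝ) {p : Fin (n + 4)}
    (hp : p = p1 n ∨ p = p2 n) (a b : Fin (n + 4)) (x : Pt n) :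
    pd p (fun y => Gmet A y a b) x = 0 := by
  apply pd_eq_zero_of_line
  intro t
  have h1 : ∀ i : Fin n, (x + t • (Pi.single p 1 : Pt n)) (ehat i) = x (ehat i) := by
    intro i
    rcases hp with rfl | rfl <;> simp [ehat_ne_p1, ehat_ne_p2]
  have h2 : (x + t • (Pi.single p 1 : Pt n)) (q1 n) = x (q1 n) := by
    rcases hp with rfl | rfl <;> simp [p1_ne_q1.symm, p2_ne_q1.symm]
  simp only [Gmet, u, Fq, h1, h2]

lemma pd_Gmet_p (A : Fin N → Matrix (Fin n) (Fin n) ℝ) {p : Fin (n + 4)}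
    (hp : p = p1 n ∨ p = p2 n) (a b : Fin (n + 4)) (x : Pt n) :
    pd b (fun y => Gmet A y p a) x = 0 := by
  rcases hp with rfl | rfl
  · simp only [Gmet_p1, pd_const]
  · simp only [Gmet_p2, pd_const]

lemma pd_Gmet_p' (A : Fin N → Matrix (Fin n) (Fin n) ℝ) {p : Fin (n + 4)}
    (hp : p = p1 n ∨ p = p2 n) (a b : Fin (n + 4)) (x : Pt n) :
    pd b (fun y => Gmet A y a p) x = 0 := by
  simp only [Gmet_symm A _ a p, pd_Gmet_p A hp]

/-- Since `u^î` is linear in the `x^ĵ`, its derivatives `∂_ĵ u^î` depend on `x^{n+3}` only. -/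
lemma pd_u_inv (A : Fin N → Matrix (Fin n) (Fin n) ℝ) (i j : Fin n) :
    YInv (pd (ehat j) (u A i)) := by
  have key : ∀ x, pd (ehat j) (u A i) x = ∑ α : Fin N, A α i j * x (q1 n) ^ (α.1 + 1) := by
    intro x
    have hd : DifferentiableAt ℝ (u A i) x := by unfold u; fun_prop
    unfold pd
    rw [← hd.lineDeriv_eq_fderiv]
    have hl : ∀ t : ℝ, u A i (x + t • Pi.single (ehat j) 1)
        = u A i x + t * ∑ α : Fin N, A α i j * x (q1 n) ^ (α.1 + 1) := by
      intro t
      have hs : ∀ k : Fin n, (Pi.single (ehat j) (1 : ℝ) : Pt n) (ehat k)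
          = if k = j then 1 else 0 := by
        intro k; simp [Pi.single_apply, ehat_inj]
      simp only [u, Pi.add_apply, Pi.smul_apply, hs, smul_eq_mul,
        Pi.single_eq_of_ne (ehat_ne_q1 j).symm, mul_zero, add_zero, mul_add, add_mul,
        Finset.sum_add_distrib]
      congr 1
      rw [Finset.sum_eq_single j]
      · simp [Finset.mul_sum]
        exact Finset.sum_congr rfl fun α _ => by ring
      · intro k _ hk; simp [hk]
      · simp
    simp only [lineDeriv, hl]
    simp
  intro x y h
  rw [key, key, h]

/-! ### Christoffel symbols -/

lemma chr_p_right (A : Fin N → Matrix (Fin n) (Fin n) ℝ) {p : Fin (n + 4)}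
    (hp : p = p1 n ∨ p = p2 n) (a b : Fin (n + 4)) (x : Pt n) : Γchr A a b p x = 0 := by
  simp [Γchr, pd_Gmet_p' A hp, pd_p_Gmet A hp]

lemma chr_p_left (A : Fin N → Matrix (Fin n) (Fin n) ℝ) {p : Fin (n + 4)}
    (hp : p = p1 n ∨ p = p2 n) (a b : Fin (n + 4)) (x : Pt n) : Γchr A a p b x = 0 := by
  simp [Γchr, pd_Gmet_p A hp, pd_p_Gmet A hp]

lemma chr_q (A : Fin N → Matrix (Fin n) (Fin n) ℝ) {q : Fin (n + 4)}
    (hq : ¬ Vert q) (b c : Fin (n + 4)) (x : Pt n) : Γchr A q b c x = 0 := by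
  have aux : ∀ p, p = p1 n ∨ p = p2 n → (Gmet A x)⁻¹ q = Pi.single p 1 → Γchr A q b c x = 0 := by
    intro p hp h
    rw [Γchr, h, Finset.sum_eq_single p]
    · simp [pd_Gmet_p A hp, pd_Gmet_p' A hp, pd_p_Gmet A hp]
    · intro d _ hd; simp [hd]
    · simp
  have hq' : q = q1 n ∨ q = q2 n := by unfold Vert at hq; tauto
  rcases hq' with rfl | rfl
  · refine aux (p1 n) (Or.inl rfl) (inv_row A x _ _ ?_)
    funext b
    simp [Gmet_p1, Pi.single_apply]
  · refine aux (p2 n) (Or.inr rfl) (inv_row A x _ _ ?_)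
    funext b
    simp [Gmet_p2, Pi.single_apply]

lemma chr_ehat (A : Fin N → Matrix (Fin n) (Fin n) ℝ) (i : Fin n) (b c : Fin (n + 4))
    (x : Pt n) :
    Γchr A (ehat i) b c x = (1 / 2) * (pd b (fun y => Gmet A y (ehat i) c) x
      + pd c (fun y => Gmet A y b (ehat i)) x - pd (ehat i) (fun y => Gmet A y b c) x) := by
  have h : (Gmet A x)⁻¹ (ehat i) = Pi.single (ehat i) 1 - u A i x • Pi.single (p2 n) 1 := by
    apply inv_row
    funext b
    simp [Matrix.sub_vecMul, Matrix.smul_vecMul, Gmet_p2, Gmet_ehat,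
      Pi.single_apply]
  have hp : p2 n = p1 n ∨ p2 n = p2 n := Or.inr rfl
  rw [Γchr, h]
  simp only [Pi.sub_apply, Pi.smul_apply, sub_mul, Finset.sum_sub_distrib, smul_eq_mul]
  rw [Finset.sum_eq_single (ehat i), Finset.sum_eq_single (p2 n)]
  · simp [pd_Gmet_p A hp, pd_Gmet_p' A hp, pd_p_Gmet A hp]
  · intro d _ hd; simp [hd]
  · simp
  · intro d _ hd; simp [hd]
  · simp

lemma pd_Gmet_ehat (A : Fin N → Matrix (Fin n) (Fin n) ℝ) (i : Fin n) (a b : Fin (n + 4))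
    (x : Pt n) :
    pd b (fun y => Gmet A y (ehat i) a) x = if a = q2 n then pd b (u A i) x else 0 := by
  by_cases h : a = q2 n
  · subst h
    simp [Gmet_ehat, (ehat_ne_q2 i).symm]
  · simp only [Gmet_ehat, h, if_false, pd_const]

/-- The symbols `Γ^î_{cĵ}` are `½ (∂_ĵ u^î - ∂_î u^ĵ)` for `c = q2` and zero otherwise. -/
lemma chr_ehat_ehat (A : Fin N → Matrix (Fin n) (Fin n) ℝ) (i j : Fin n) (c : Fin (n + 4))
    (x : Pt n) :
    Γchr A (ehat i) c (ehat j) x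
      = if c = q2 n then (1 / 2) * (pd (ehat j) (u A i) x - pd (ehat i) (u A j) x) else 0 := by
  rw [chr_ehat]
  simp only [Gmet_symm A _ c, pd_Gmet_ehat, ehat_ne_q2, if_false]
  split_ifs <;> ring

lemma chr_ehat_vert (A : Fin N → Matrix (Fin n) (Fin n) ℝ) (i j : Fin n) {c : Fin (n + 4)}
    (hc : Vert c) (x : Pt n) : Γchr A (ehat i) c (ehat j) x = 0 := by
  rw [chr_ehat_ehat, if_neg hc.2]

lemma chr_inv (A : Fin N → Matrix (Fin n) (Fin n) ℝ) (i j : Fin n) (c : Fin (n + 4)) :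
    YInv (Γchr A (ehat i) c (ehat j)) := by
  intro x y h
  simp only [chr_ehat_ehat, pd_u_inv A i j x y h, pd_u_inv A j i x y h]

/-! ### Curvature and its covariant derivatives -/

/-- A partial derivative of a function which vanishes identically. -/
lemma pd_of_zero (b : Fin (n + 4)) {f : Pt n → ℝ} (h : ∀ x, f x = 0) (x : Pt n) :
    pd b f x = 0 := by
  rw [funext h, pd_const]

/-- The properties of the components of `∇^r R` which propagate under covariant
differentiation; `fs` is the list of differentiation indices. -/
structure Good (A : Fin N → Matrix (Fin n) (Fin n) ℝ) (fs : List (Fin (n + 4))) : Prop where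
  upper : ∀ q, ¬ Vert q → ∀ b c d x, covRAux A q b c d fs x = 0
  lower : ∀ p, p = p1 n ∨ p = p2 n → ∀ a c d x, covRAux A a p c d fs x = 0
  vert : ∀ (i j : Fin n) c d, (Vert c ∨ Vert d ∨ ∃ f ∈ fs, Vert f) →
    ∀ x, covRAux A (ehat i) (ehat j) c d fs x = 0
  inv : ∀ (i j : Fin n) c d, YInv (covRAux A (ehat i) (ehat j) c d fs)

lemma good_nil (A : Fin N → Matrix (Fin n) (Fin n) ℝ) : Good A [] where
  upper q hq b c d x := by
    simp only [covRAux, Rcurv, pd_of_zero _ (chr_q A hq _ _), chr_q A hq]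
    simp
  lower p hp a c d x := by
    simp only [covRAux, Rcurv, pd_of_zero _ (chr_p_right A hp _ _), chr_p_right A hp]
    simp
  vert i j c d h x := by
    have hs : ∀ c d, Vert c → ∀ e,
        Γchr A (ehat i) c e x * Γchr A e d (ehat j) x = 0 ∧
        Γchr A (ehat i) d e x * Γchr A e c (ehat j) x = 0 := by
      intro c d hc e
      rcases idx_cases e with he | he | ⟨m, rfl⟩ | he | he
      · simp [chr_p_right A (Or.inl he)]
      · simp [chr_p_right A (Or.inr he)]
      · simp [chr_ehat_vert A _ _ hc]
      · simp [chr_q A (show ¬ Vert e from fun h => h.1 he)]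
      · simp [chr_q A (show ¬ Vert e from fun h => h.2 he)]
    simp only [List.not_mem_nil, false_and, exists_false, or_false] at h
    simp only [covRAux, Rcurv]
    rcases h with h | h
    · rw [(chr_inv A i j d).pd_eq_zero h.1, pd_of_zero _ (chr_ehat_vert A i j h),
        Finset.sum_eq_zero fun e _ => by rw [(hs c d h e).1, (hs c d h e).2, sub_zero]]
      simp
    · rw [(chr_inv A i j c).pd_eq_zero h.1, pd_of_zero _ (chr_ehat_vert A i j h),
        Finset.sum_eq_zero fun e _ => by rw [(hs d c h e).1, (hs d c h e).2, sub_zero]]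
      simp
  inv i j c d := by
    have hs : ∀ c d e, YInv fun x => Γchr A (ehat i) c e x * Γchr A e d (ehat j) x := by
      intro c d e
      rcases idx_cases e with he | he | ⟨m, rfl⟩ | he | he
      · simpa [chr_p_right A (Or.inl he)] using YInv.zero
      · simpa [chr_p_right A (Or.inr he)] using YInv.zero
      · exact (chr_inv A _ _ _).mul (chr_inv A _ _ _)
      · simpa [chr_q A (show ¬ Vert e from fun h => h.1 he)] using YInv.zero
      · simpa [chr_q A (show ¬ Vert e from fun h => h.2 he)] using YInv.zero
    have := (((chr_inv A i j d).pd c).sub ((chr_inv A i j c).pd d)).add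
      (YInv.sum fun e => (hs c d e).sub (hs d c e))
    intro x y h
    simpa only [covRAux, Rcurv] using this x y h

/-- For the components with indices `î`, `ĵ`, the corrections of the remaining lower
indices do not contribute to the covariant derivative. -/
lemma covRAux_cons_ehat (A : Fin N → Matrix (Fin n) (Fin n) ℝ) (f : Fin (n + 4))
    (fs : List (Fin (n + 4)))
    (ih : ∀ gs : List (Fin (n + 4)), gs.length = fs.length → Good A gs)
    (i j : Fin n) (c d : Fin (n + 4)) (x : Pt n) :
    covRAux A (ehat i) (ehat j) c d (f :: fs) x
      = pd f (covRAux A (ehat i) (ehat j) c d fs) x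
        + ∑ l : Fin (n + 4), Γchr A (ehat i) f l x * covRAux A l (ehat j) c d fs x
        - ∑ l : Fin (n + 4), Γchr A l f (ehat j) x * covRAux A (ehat i) l c d fs x := by
  have hfs := ih fs rfl
  rw [covRAux]
  rw [Finset.sum_eq_zero (f := fun l => Γchr A l f c x * covRAux A (ehat i) (ehat j) l d fs x),
    Finset.sum_eq_zero (f := fun l => Γchr A l f d x * covRAux A (ehat i) (ehat j) c l fs x),
    Finset.sum_eq_zero (f := fun s : Fin fs.length => ∑ l : Fin (n + 4),
      Γchr A l f (fs.get s) x * covRAux A (ehat i) (ehat j) c d (fs.set s l) x)]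
  · ring
  · intro s _
    refine Finset.sum_eq_zero fun l _ => ?_
    by_cases hl : Vert l
    · rw [(ih (fs.set s l) (by simp)).vert i j c d
        (Or.inr (Or.inr ⟨l, List.mem_set s.isLt l, hl⟩)), mul_zero]
    · rw [chr_q A hl, zero_mul]
  · intro l _
    by_cases hl : Vert l
    · rw [hfs.vert i j c l (Or.inr (Or.inl hl)), mul_zero]
    · rw [chr_q A hl, zero_mul]
  · intro l _
    by_cases hl : Vert l
    · rw [hfs.vert i j l d (Or.inl hl), mul_zero]
    · rw [chr_q A hl, zero_mul]

lemma good_cons (A : Fin N → Matrix (Fin n) (Fin n) ℝ) (f : Fin (n + 4))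
    (fs : List (Fin (n + 4)))
    (ih : ∀ gs : List (Fin (n + 4)), gs.length = fs.length → Good A gs) : Good A (f :: fs) where
  upper q hq b c d x := by
    have h := fun gs hg => (ih gs hg).upper q hq
    rw [covRAux, pd_of_zero _ (h fs rfl b c d)]
    simp [chr_q A hq, h]
  lower p hp a c d x := by
    have h := fun gs hg => (ih gs hg).lower p hp
    rw [covRAux, pd_of_zero _ (h fs rfl a c d)]
    simp [chr_p_right A hp, h]
  vert i j c d h x := by
    have hfs := ih fs rfl
    rw [covRAux_cons_ehat A f fs ih]
    by_cases hf : Vert f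
    · rw [(hfs.inv i j c d).pd_eq_zero hf.1]
      rw [Finset.sum_eq_zero, Finset.sum_eq_zero]
      · simp
      · intro l _
        rcases idx_cases l with hl | hl | ⟨m, rfl⟩ | hl | hl
        · rw [hfs.lower l (Or.inl hl), mul_zero]
        · rw [hfs.lower l (Or.inr hl), mul_zero]
        · rw [chr_ehat_vert A _ _ hf, zero_mul]
        · rw [chr_q A (fun h => h.1 hl), zero_mul]
        · rw [chr_q A (fun h => h.2 hl), zero_mul]
      · intro l _
        rcases idx_cases l with hl | hl | ⟨m, rfl⟩ | hl | hl
        · rw [chr_p_right A (Or.inl hl), zero_mul]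
        · rw [chr_p_right A (Or.inr hl), zero_mul]
        · rw [chr_ehat_vert A _ _ hf, zero_mul]
        · rw [hfs.upper l (fun h => h.1 hl), mul_zero]
        · rw [hfs.upper l (fun h => h.2 hl), mul_zero]
    · have h' : Vert c ∨ Vert d ∨ ∃ f ∈ fs, Vert f := by
        simpa [hf] using h
      have hz : ∀ i j : Fin n, ∀ x, covRAux A (ehat i) (ehat j) c d fs x = 0 :=
        fun i j => hfs.vert i j c d h'
      rw [pd_of_zero _ (hz i j), Finset.sum_eq_zero, Finset.sum_eq_zero]
      · simp
      · intro l _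
        rcases idx_cases l with hl | hl | ⟨m, rfl⟩ | hl | hl
        · rw [hfs.lower l (Or.inl hl), mul_zero]
        · rw [hfs.lower l (Or.inr hl), mul_zero]
        · rw [hz, mul_zero]
        · rw [chr_q A (fun h => h.1 hl), zero_mul]
        · rw [chr_q A (fun h => h.2 hl), zero_mul]
      · intro l _
        rcases idx_cases l with hl | hl | ⟨m, rfl⟩ | hl | hl
        · rw [chr_p_right A (Or.inl hl), zero_mul]
        · rw [chr_p_right A (Or.inr hl), zero_mul]
        · rw [hz, mul_zero]
        · rw [hfs.upper l (fun h => h.1 hl), mul_zero]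
        · rw [hfs.upper l (fun h => h.2 hl), mul_zero]
  inv i j c d := by
    have hfs := ih fs rfl
    rw [funext (covRAux_cons_ehat A f fs ih i j c d)]
    refine (((hfs.inv i j c d).pd f).add (YInv.sum fun l => ?_)).sub (YInv.sum fun l => ?_)
    · rcases idx_cases l with hl | hl | ⟨m, rfl⟩ | hl | hl
      · simpa [chr_p_right A (Or.inl hl)] using YInv.zero
      · simpa [chr_p_right A (Or.inr hl)] using YInv.zero
      · exact (chr_inv A _ _ _).mul (hfs.inv _ _ _ _)
      · simpa [hfs.upper l (fun h => h.1 hl)] using YInv.zero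
      · simpa [hfs.upper l (fun h => h.2 hl)] using YInv.zero
    · rcases idx_cases l with hl | hl | ⟨m, rfl⟩ | hl | hl
      · simpa [hfs.lower l (Or.inl hl)] using YInv.zero
      · simpa [hfs.lower l (Or.inr hl)] using YInv.zero
      · exact (chr_inv A _ _ _).mul (hfs.inv _ _ _ _)
      · simpa [chr_q A (show ¬ Vert l from fun h => h.1 hl)] using YInv.zero
      · simpa [chr_q A (show ¬ Vert l from fun h => h.2 hl)] using YInv.zero

/-- Induction on the length rather than on the list itself: the recursion replaces entries of
the list of differentiation indices. -/
lemma covRAux_main (A : Fin N → Matrix (Fin n) (Fin n) ℝ) :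
    ∀ (r : ℕ) (fs : List (Fin (n + 4))), fs.length = r → Good A fs := by
  intro r
  induction r with
  | zero =>
    intro fs h
    rw [List.length_eq_zero_iff.mp h]
    exact good_nil A
  | succ r ih =>
    intro fs h
    cases fs with
    | nil => simp at h
    | cons f fs =>
      have hr : fs.length = r := by simpa using h
      exact good_cons A f fs fun gs hg => ih gs (hg.trans hr)

/-- `R^î_{ĵ,b,c;f_1;…;f_r;k̂} = 0`: covariant differentiation in any of the directions
`x^3,…,x^{n+2}` annihilates these components. -/
theorem statement13 (n N : ℕ) (hn : 1 ≤ n) (hN : 1 ≤ N)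
    (A : Fin N → Matrix (Fin n) (Fin n) ℝ) (hA : ∀ α, (A α)ᵀ = -A α) :
    ∀ (fs : List (Fin (n + 4))) (b c : Fin (n + 4)) (k : Fin n) (i j : Fin n) (x : Pt n),
      covR A (ehat i) (ehat j) b c (fs ++ [ehat k]) x = 0 := by
  intro fs b c k i j x
  rw [covR]
  exact (covRAux_main A _ _ rfl).vert i j b c
    (Or.inr (Or.inr ⟨ehat k, by simp, vert_ehat k⟩)) x

end
end HolPaper
end

section
/- Assume additionally that the linear span h of A_1, …, A_N is closed under matrix commutators (so h is a Lie subalgebra of so(n)). Then for every r ≥ 0 and all f_1, …, f_r ∈ {n+3, n+4}, the n×n matrix with (î−2, ĵ−2) entry R^î_{ĵ, n+3, n+4; f_1; …; f_r}(0) (for î, ĵ ∈ {3, …, n+2}) belongs to h. -/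
/-!
The holonomy-type statement reduces to a computation along the slice `S` where the middle
coordinates `x^î` all vanish; the base point `0` lies in `S`, and the directions `n+3`, `n+4` are
tangent to `S`, so the only data transverse to `S` that enter are the first derivatives of the
metric.

On `S` the metric is the constant permutation form pairing `1` with `n+3`, `2` with `n+4` and each
`î` with itself, and the only nonzero first derivatives of the metric are
`∂_ĵ G_{î,n+4} = ∂_ĵ G_{n+4,î} = A(s)_{ij}` with `A(s) = Σ_α s^α A_α`, `s = x^{n+3}`. Hence, for
`f, g ∈ {n+3, n+4}`, all `Γ^a_{fg}` vanish on `S` (`Γchr_outer_outer`), `Γ^a_{fc}` vanishes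
unless `a` is a middle index (`Γchr_outer_upper`), and the block `C_f = (Γ^î_{fĵ})` is `0` for
`f = n+3` and `A(s)` for `f = n+4` (`Cmat_mem`); this uses that the `A_α` are skew-symmetric.

Consequently, on `S`, the curvature block is `∂_{n+3} C_{n+4} - ∂_{n+4} C_{n+3} + [C_{n+3}, C_{n+4}]`,
and a further covariant derivative along `f` turns a block `T` into `∂_f T + [C_f, T]`. The span `h`
of the `A_α` contains each `C_f`, is closed under commutators, and is closed under
differentiation along `S` because it is a closed subspace (`pd_mem`); so all blocks stay in `h`
(`covRAux_mem`). Smoothness of all components, needed for the partial derivatives to be genuine,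
follows from the invertibility of the metric and Cramer's rule.
-/

namespace HolPaper

open Matrix

noncomputable section

variable {n N : ℕ}

section Proof

lemma index_ne (i : Fin n) :
    (ehat i ≠ p1 n ∧ ehat i ≠ p2 n ∧ ehat i ≠ q1 n ∧ ehat i ≠ q2 n) ∧
    (p1 n ≠ ehat i ∧ p2 n ≠ ehat i ∧ q1 n ≠ ehat i ∧ q2 n ≠ ehat i) := by
  have := i.isLt
  simp only [ehat, p1, p2, q1, q2, ne_eq, Fin.mk.injEq]
  omega

lemma pq_ne (n : ℕ) :
    (p1 n ≠ p2 n ∧ p1 n ≠ q1 n ∧ p1 n ≠ q2 n ∧ p2 n ≠ q1 n ∧ p2 n ≠ q2 n ∧ q1 n ≠ q2 n) ∧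
    (p2 n ≠ p1 n ∧ q1 n ≠ p1 n ∧ q2 n ≠ p1 n ∧ q1 n ≠ p2 n ∧ q2 n ≠ p2 n ∧ q2 n ≠ q1 n) := by
  simp only [p1, p2, q1, q2, ne_eq, Fin.mk.injEq]
  omega

lemma index_cases (a : Fin (n + 4)) :
    a = p1 n ∨ a = p2 n ∨ a = q1 n ∨ a = q2 n ∨ ∃ i : Fin n, a = ehat i := by
  have h := a.isLt
  by_cases h2 : 2 ≤ a.1 ∧ a.1 < n + 2
  · right; right; right; right
    exact ⟨⟨a.1 - 2, by omega⟩, by simp only [ehat, Fin.ext_iff]; omega⟩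
  · simp only [p1, p2, q1, q2, Fin.ext_iff]
    omega

/-- The double delta `Σ_k δ_{ik} δ_{jk} = δ_{ij}`, in the form in which it appears once indicator
sums are rewritten as cardinalities. -/
lemma card_delta (i j : Fin n) :
    ((Finset.univ.filter fun k => i = k ∧ j = k).card : ℝ) = if i = j then 1 else 0 := by
  rw [← Finset.sum_boole]
  by_cases h : i = j
  · subst h; simp
  · rw [if_neg h]
    exact Finset.sum_eq_zero fun k _ => if_neg fun hk => h (hk.1.trans hk.2.symm)

lemma ehat_injective : Function.Injective (ehat : Fin n → Fin (n + 4)) :=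
  fun _ _ h => ehat_inj.1 h

lemma sum_eq_sum_ehat (f : Fin (n + 4) → ℝ) (h : ∀ l, (∀ i : Fin n, l ≠ ehat i) → f l = 0) :
    ∑ l, f l = ∑ i : Fin n, f (ehat i) := by
  rw [← Finset.sum_image (g := ehat) (s := Finset.univ) (f := f)
    (fun a _ b _ hab => ehat_injective hab)]
  symm
  apply Finset.sum_subset (Finset.subset_univ _)
  intro l _ hl
  apply h
  rintro i rfl
  exact hl (Finset.mem_image_of_mem _ (Finset.mem_univ i))

lemma ne_ehat_of_q {f : Fin (n + 4)} (hf : f = q1 n ∨ f = q2 n) (i : Fin n) : f ≠ ehat i := by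
  rcases hf with rfl | rfl
  · exact (index_ne i).2.2.2.1
  · exact (index_ne i).2.2.2.2

/-! ### Nondegeneracy and smoothness -/

lemma sum_split (f : Fin (n + 4) → ℝ) :
    ∑ l, f l = f (p1 n) + f (p2 n) + f (q1 n) + f (q2 n) + ∑ i : Fin n, f (ehat i) := by
  have h := sum_eq_sum_ehat (fun l => if ∃ i : Fin n, l = ehat i then f l else 0)
    (fun l hl => by simp [hl])
  have h2 := pq_ne n
  have h3 : ∀ l, f l = (if ∃ i : Fin n, l = ehat i then f l else 0)
      + (if l = p1 n then f l else 0) + (if l = p2 n then f l else 0)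
      + (if l = q1 n then f l else 0) + (if l = q2 n then f l else 0) := by
    intro l
    rcases index_cases l with rfl | rfl | rfl | rfl | ⟨i, rfl⟩ <;>
      simp [h2, index_ne, ehat_inj]
  rw [Finset.sum_congr rfl (fun l _ => h3 l)]
  simp only [Finset.sum_add_distrib, h]
  simp [ehat_inj]
  ring

lemma det_Gmet_ne_zero (A : Fin N → Matrix (Fin n) (Fin n) ℝ) (x : Pt n) :
    (Gmet A x).det ≠ 0 := by
  intro hdet
  obtain ⟨v, hv0, hv⟩ := Matrix.exists_mulVec_eq_zero_iff.2 hdet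
  apply hv0
  have row : ∀ a, ∑ b, Gmet A x a b * v b = 0 := fun a => congrFun hv a
  have h2 := pq_ne n
  have e1 := row (p1 n)
  have e2 := row (p2 n)
  have e3 := row (q1 n)
  have e4 := row (q2 n)
  have e5 := fun i => row (ehat i)
  simp only [sum_split] at e1 e2 e3 e4 e5
  simp [Gmet, h2, index_ne, ehat_inj] at e1 e2
  simp [Gmet, h2, index_ne, ehat_inj, card_delta, e1, e2] at e5
  simp [Gmet, h2, index_ne, ehat_inj, e1, e2, e5] at e3 e4
  funext a
  rcases index_cases a with rfl | rfl | rfl | rfl | ⟨i, rfl⟩ <;> simp [e1, e2, e3, e4, e5]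

open scoped ContDiff

lemma contDiff_Gmet (A : Fin N → Matrix (Fin n) (Fin n) ℝ) (a b : Fin (n + 4)) :
    ContDiff ℝ ∞ (fun x => Gmet A x a b) := by
  have hu : ∀ i, ContDiff ℝ ∞ (u A i) := by intro i; unfold u; fun_prop
  have hF : ContDiff ℝ ∞ (Fq n) := by unfold Fq; fun_prop
  unfold Gmet
  refine ContDiff.add (ContDiff.add (by fun_prop) (ContDiff.sum fun i _ => ?_)) ?_
  · split_ifs
    · exact hu i
    · fun_prop
  · split_ifs
    · exact hF
    · fun_prop

lemma contDiff_det {m : ℕ} (M : Pt n → Matrix (Fin m) (Fin m) ℝ)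
    (hM : ∀ a b, ContDiff ℝ ∞ (fun x => M x a b)) : ContDiff ℝ ∞ (fun x => (M x).det) := by
  simp only [Matrix.det_apply']
  exact ContDiff.sum fun σ _ => contDiff_const.mul (contDiff_prod fun i _ => hM _ _)

/-- By Cramer's rule the inverse metric is as smooth as the metric. -/
lemma contDiff_Gmet_inv (A : Fin N → Matrix (Fin n) (Fin n) ℝ) (a b : Fin (n + 4)) :
    ContDiff ℝ ∞ (fun x => (Gmet A x)⁻¹ a b) := by
  have h : ∀ x, (Gmet A x)⁻¹ a b = (Gmet A x).det⁻¹ * (Gmet A x).adjugate a b := by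
    intro x
    rw [Matrix.inv_def, Matrix.smul_apply, smul_eq_mul, Ring.inverse_eq_inv']
  simp only [h]
  refine ((contDiff_det _ (contDiff_Gmet A)).inv (det_Gmet_ne_zero A)).mul ?_
  simp only [Matrix.adjugate_apply]
  refine contDiff_det _ fun c d => ?_
  by_cases hc : c = b
  · subst hc; simp only [Matrix.updateRow_self]; fun_prop
  · simp only [Matrix.updateRow_ne hc]; exact contDiff_Gmet A c d

lemma contDiff_pd (b : Fin (n + 4)) {f : Pt n → ℝ} (hf : ContDiff ℝ ∞ f) :
    ContDiff ℝ ∞ (pd b f) := by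
  unfold pd
  exact (hf.fderiv_right (m := ∞) (by simp)).clm_apply contDiff_const

lemma contDiff_Γchr (A : Fin N → Matrix (Fin n) (Fin n) ℝ) (a b c : Fin (n + 4)) :
    ContDiff ℝ ∞ (Γchr A a b c) := by
  unfold Γchr
  refine contDiff_const.mul (ContDiff.sum fun d _ => (contDiff_Gmet_inv A a d).mul ?_)
  exact ((contDiff_pd _ (contDiff_Gmet A _ _)).add (contDiff_pd _ (contDiff_Gmet A _ _))).sub
    (contDiff_pd _ (contDiff_Gmet A _ _))

lemma contDiff_Rcurv (A : Fin N → Matrix (Fin n) (Fin n) ℝ) (a b c d : Fin (n + 4)) :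
    ContDiff ℝ ∞ (Rcurv A a b c d) := by
  have hΓ := contDiff_Γchr A
  unfold Rcurv
  exact ((contDiff_pd _ (hΓ _ _ _)).sub (contDiff_pd _ (hΓ _ _ _))).add
    (ContDiff.sum fun e _ => ((hΓ _ _ _).mul (hΓ _ _ _)).sub ((hΓ _ _ _).mul (hΓ _ _ _)))

lemma contDiff_covRAux (A : Fin N → Matrix (Fin n) (Fin n) ℝ) (r : ℕ) :
    ∀ (a b c d : Fin (n + 4)) (fs : List (Fin (n + 4))), fs.length = r →
      ContDiff ℝ ∞ (covRAux A a b c d fs) := by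
  have hΓ := contDiff_Γchr A
  induction r with
  | zero =>
    intro a b c d fs hfs
    obtain rfl := List.length_eq_zero_iff.1 hfs
    have : covRAux A a b c d [] = Rcurv A a b c d := by funext x; rw [covRAux]
    rw [this]
    exact contDiff_Rcurv A a b c d
  | succ r ih =>
    intro a b c d fs hfs
    match fs, hfs with
    | f :: fs, hfs =>
      have hl : fs.length = r := by simpa using hfs
      have := funext (fun x => covRAux.eq_2 A a b c d x f fs)
      rw [show covRAux A a b c d (f :: fs) = _ from this]
      exact (((((contDiff_pd _ (ih _ _ _ _ _ hl)).add
        (ContDiff.sum fun l _ => (hΓ _ _ _).mul (ih _ _ _ _ _ hl))).sub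
        (ContDiff.sum fun l _ => (hΓ _ _ _).mul (ih _ _ _ _ _ hl))).sub
        (ContDiff.sum fun l _ => (hΓ _ _ _).mul (ih _ _ _ _ _ hl))).sub
        (ContDiff.sum fun l _ => (hΓ _ _ _).mul (ih _ _ _ _ _ hl))).sub
        (ContDiff.sum fun s _ => ContDiff.sum fun l _ =>
          (hΓ _ _ _).mul (ih _ _ _ _ _ (by simpa using hl)))

/-! ### The connection on the slice `x^î = 0` -/

/-- The slice of `ℝ^{n+4}` where all coordinates `x^î` vanish. -/
def Slice (n : ℕ) : Set (Pt n) := {x | ∀ i : Fin n, x (ehat i) = 0}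

/-- The involution of indices `1 ↔ n+3`, `2 ↔ n+4`, `î ↦ î` that encodes the metric along the
slice: there `G_{ab} = 1` if `b` is the dual of `a`, and `0` otherwise. -/
def dual (a : Fin (n + 4)) : Fin (n + 4) :=
  if a = p1 n then q1 n else if a = q1 n then p1 n
  else if a = p2 n then q2 n else if a = q2 n then p2 n else a

lemma dual_dual (a : Fin (n + 4)) : dual (dual a) = a := by
  have h2 := pq_ne n
  rcases index_cases a with rfl | rfl | rfl | rfl | ⟨i, rfl⟩ <;> simp [dual, h2, index_ne]

lemma dual_ehat (i : Fin n) : dual (ehat i) = ehat i := by simp [dual, index_ne]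

lemma dual_ne_ehat {a : Fin (n + 4)} (h : ∀ i : Fin n, a ≠ ehat i) (i : Fin n) :
    dual a ≠ ehat i := by
  intro h'
  apply h i
  rw [← dual_dual a, h', dual_ehat]

lemma u_slice (A : Fin N → Matrix (Fin n) (Fin n) ℝ) (i : Fin n) {x : Pt n} (hx : x ∈ Slice n) :
    u A i x = 0 := by
  have hx' : ∀ i : Fin n, x (ehat i) = 0 := hx
  simp [u, hx']

lemma Fq_slice {x : Pt n} (hx : x ∈ Slice n) : Fq n x = 0 := by
  have hx' : ∀ i : Fin n, x (ehat i) = 0 := hx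
  simp [Fq, hx']

lemma Gmet_slice (A : Fin N → Matrix (Fin n) (Fin n) ℝ) {x : Pt n} (hx : x ∈ Slice n) :
    Gmet A x = Matrix.of fun a b => if b = dual a then 1 else 0 := by
  have h2 := pq_ne n
  ext a b
  simp only [Gmet, u_slice A _ hx, Fq_slice hx]
  rcases index_cases a with rfl | rfl | rfl | rfl | ⟨i, rfl⟩ <;>
  rcases index_cases b with rfl | rfl | rfl | rfl | ⟨j, rfl⟩ <;>
    simp [h2, index_ne, ehat_inj, card_delta, dual, eq_comm]

lemma Gmet_inv_slice (A : Fin N → Matrix (Fin n) (Fin n) ℝ) {x : Pt n} (hx : x ∈ Slice n) :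
    (Gmet A x)⁻¹ = Matrix.of fun a b => if b = dual a then 1 else 0 := by
  rw [Gmet_slice A hx]
  apply Matrix.inv_eq_right_inv
  ext a b
  simp only [Matrix.mul_apply, Matrix.of_apply, ite_mul, one_mul, zero_mul,
    Finset.sum_ite_eq', Finset.mem_univ, if_true, dual_dual, Matrix.one_apply]
  simp only [eq_comm]

/-- `A(s) = Σ_α s^α A_α`, evaluated at `s = x^{n+3}`. -/
def Acurve (A : Fin N → Matrix (Fin n) (Fin n) ℝ) (x : Pt n) : Matrix (Fin n) (Fin n) ℝ :=
  ∑ α : Fin N, x (q1 n) ^ (α.1 + 1) • A α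

lemma slice_add {x : Pt n} (hx : x ∈ Slice n) {b : Fin (n + 4)} (hb : ∀ i : Fin n, b ≠ ehat i)
    (t : ℝ) : x + t • Pi.single b 1 ∈ Slice n := by
  intro i
  simp [hx i, Pi.single_eq_of_ne (hb i).symm]

lemma pd_eq_of_hasDerivAt {b : Fin (n + 4)} {f : Pt n → ℝ} (hf : ContDiff ℝ ∞ f) {x : Pt n}
    {f' : ℝ} (h : HasDerivAt (fun t : ℝ => f (x + t • Pi.single b 1)) f' 0) : pd b f x = f' := by
  have hd : DifferentiableAt ℝ f x := hf.differentiable (by simp) x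
  rw [pd, ← hd.lineDeriv_eq_fderiv]
  exact HasLineDerivAt.lineDeriv h

lemma pd_Gmet_slice_of_ne (A : Fin N → Matrix (Fin n) (Fin n) ℝ) {x : Pt n} (hx : x ∈ Slice n)
    {b : Fin (n + 4)} (hb : ∀ i : Fin n, b ≠ ehat i) (c d : Fin (n + 4)) :
    pd b (fun y => Gmet A y c d) x = 0 := by
  apply pd_eq_of_hasDerivAt (contDiff_Gmet A c d)
  simp only [Gmet_slice A (slice_add hx hb _)]
  exact hasDerivAt_const _ _

lemma pd_Gmet_slice_ehat (A : Fin N → Matrix (Fin n) (Fin n) ℝ) {x : Pt n} (hx : x ∈ Slice n)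
    (j : Fin n) (c d : Fin (n + 4)) :
    pd (ehat j) (fun y => Gmet A y c d) x =
      ∑ i, if (c = ehat i ∧ d = q2 n) ∨ (c = q2 n ∧ d = ehat i) then Acurve A x i j else 0 := by
  have hx' : ∀ i : Fin n, x (ehat i) = 0 := hx
  apply pd_eq_of_hasDerivAt (contDiff_Gmet A c d)
  have hy : ∀ (t : ℝ) (k : Fin n),
      (x + t • Pi.single (ehat j) (1 : ℝ) : Pt n) (ehat k) = if k = j then t else 0 := by
    intro t k
    simp [hx', Pi.single_apply, ehat_inj]
  have hs : ∀ t : ℝ, (x + t • Pi.single (ehat j) (1 : ℝ) : Pt n) (q1 n) = x (q1 n) := by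
    intro t
    simp [index_ne]
  have hu : ∀ (t : ℝ) i, u A i (x + t • Pi.single (ehat j) (1 : ℝ)) = t * Acurve A x i j := by
    intro t i
    simp only [u, hy, hs, Acurve, Matrix.sum_apply, Matrix.smul_apply, smul_eq_mul]
    rw [Finset.sum_eq_single j]
    · simp only [if_true, Finset.mul_sum]
      exact Finset.sum_congr rfl fun α _ => by ring
    · intro k _ hk; simp [hk]
    · simp
  have hF : ∀ t : ℝ, Fq n (x + t • Pi.single (ehat j) (1 : ℝ)) = t ^ 2 := by
    intro t
    simp only [Fq, hy]
    rw [Finset.sum_eq_single j]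
    · simp
    · intro k _ hk; simp [hk]
    · simp
  simp only [Gmet, hu, hF]
  have h1 : HasDerivAt (fun t : ℝ => ∑ i, if (c = ehat i ∧ d = q2 n) ∨ (c = q2 n ∧ d = ehat i)
      then t * Acurve A x i j else 0)
      (∑ i, if (c = ehat i ∧ d = q2 n) ∨ (c = q2 n ∧ d = ehat i) then Acurve A x i j else 0) 0 := by
    refine HasDerivAt.fun_sum fun i _ => ?_
    split_ifs
    · simpa using (hasDerivAt_id (0 : ℝ)).mul_const (Acurve A x i j)
    · exact hasDerivAt_const _ _
  have h2 : HasDerivAt (fun t : ℝ => if (c = q1 n ∧ d = q1 n) ∨ (c = q2 n ∧ d = q2 n)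
      then t ^ 2 else 0) 0 0 := by
    split_ifs
    · simpa using hasDerivAt_pow 2 (0 : ℝ)
    · exact hasDerivAt_const _ _
  exact ((h1.const_add _).fun_add h2).congr_deriv (add_zero _)

lemma Γchr_slice (A : Fin N → Matrix (Fin n) (Fin n) ℝ) {x : Pt n} (hx : x ∈ Slice n)
    (a b c : Fin (n + 4)) :
    Γchr A a b c x = (1 / 2) * (pd b (fun y => Gmet A y (dual a) c) x
      + pd c (fun y => Gmet A y b (dual a)) x - pd (dual a) (fun y => Gmet A y b c) x) := by
  rw [Γchr, Gmet_inv_slice A hx]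
  simp

/-- First derivatives of the metric along the slice vanish unless one of the two metric indices
is a middle index. -/
lemma pd_Gmet_slice_zero (A : Fin N → Matrix (Fin n) (Fin n) ℝ) {x : Pt n} (hx : x ∈ Slice n)
    (b : Fin (n + 4)) {c d : Fin (n + 4)} (hc : ∀ i : Fin n, c ≠ ehat i)
    (hd : ∀ i : Fin n, d ≠ ehat i) : pd b (fun y => Gmet A y c d) x = 0 := by
  by_cases hb : ∃ j : Fin n, b = ehat j
  · obtain ⟨j, rfl⟩ := hb
    rw [pd_Gmet_slice_ehat A hx]
    simp [hc, hd]
  · push Not at hb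
    exact pd_Gmet_slice_of_ne A hx hb c d

lemma Γchr_outer_outer (A : Fin N → Matrix (Fin n) (Fin n) ℝ) {x : Pt n} (hx : x ∈ Slice n)
    (a : Fin (n + 4)) {b c : Fin (n + 4)} (hb : ∀ i : Fin n, b ≠ ehat i)
    (hc : ∀ i : Fin n, c ≠ ehat i) : Γchr A a b c x = 0 := by
  rw [Γchr_slice A hx, pd_Gmet_slice_of_ne A hx hb, pd_Gmet_slice_of_ne A hx hc,
    pd_Gmet_slice_zero A hx _ hb hc]
  simp

lemma Γchr_outer_upper (A : Fin N → Matrix (Fin n) (Fin n) ℝ) {x : Pt n} (hx : x ∈ Slice n)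
    {a b : Fin (n + 4)} (c : Fin (n + 4)) (ha : ∀ i : Fin n, a ≠ ehat i)
    (hb : ∀ i : Fin n, b ≠ ehat i) : Γchr A a b c x = 0 := by
  rw [Γchr_slice A hx, pd_Gmet_slice_of_ne A hx hb,
    pd_Gmet_slice_of_ne A hx (dual_ne_ehat ha),
    pd_Gmet_slice_zero A hx _ hb (dual_ne_ehat ha)]
  simp

/-- The middle block `(Γ^î_{f ĵ})` of the connection matrix in direction `f`. -/
def Cmat (A : Fin N → Matrix (Fin n) (Fin n) ℝ) (f : Fin (n + 4)) (x : Pt n) :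
    Matrix (Fin n) (Fin n) ℝ := Matrix.of fun i j => Γchr A (ehat i) f (ehat j) x

lemma Acurve_mem (A : Fin N → Matrix (Fin n) (Fin n) ℝ) (x : Pt n) :
    Acurve A x ∈ Submodule.span ℝ (Set.range A) :=
  Submodule.sum_mem _ fun α _ => Submodule.smul_mem _ _ (Submodule.subset_span ⟨α, rfl⟩)

/-- On the slice the middle block of the connection is `0` in direction `n+3` and, by
skew-symmetry of the `A_α`, equal to `A(x^{n+3})` in direction `n+4`. -/
lemma Cmat_mem (A : Fin N → Matrix (Fin n) (Fin n) ℝ) (hA : ∀ α, (A α)ᵀ = -A α)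
    {x : Pt n} (hx : x ∈ Slice n) {f : Fin (n + 4)} (hf : f = q1 n ∨ f = q2 n) :
    Cmat A f x ∈ Submodule.span ℝ (Set.range A) := by
  have h2 := pq_ne n
  have hskew : ∀ i j, Acurve A x j i = - Acurve A x i j := by
    intro i j
    simp only [Acurve, Matrix.sum_apply, Matrix.smul_apply, smul_eq_mul, ← Finset.sum_neg_distrib]
    refine Finset.sum_congr rfl fun α _ => ?_
    have := congrFun (congrFun (hA α) i) j
    simp only [Matrix.transpose_apply, Matrix.neg_apply] at this
    rw [this]; ring
  have hval : ∀ i j, Cmat A f x i j = 1 / 2 *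
      ((∑ k, if (f = ehat k ∧ ehat i = q2 n) ∨ (f = q2 n ∧ ehat i = ehat k)
          then Acurve A x k j else 0)
      - ∑ k, if (f = ehat k ∧ ehat j = q2 n) ∨ (f = q2 n ∧ ehat j = ehat k)
          then Acurve A x k i else 0) := by
    intro i j
    simp only [Cmat, Matrix.of_apply]
    rw [Γchr_slice A hx, dual_ehat, pd_Gmet_slice_of_ne A hx (ne_ehat_of_q hf),
      pd_Gmet_slice_ehat A hx, pd_Gmet_slice_ehat A hx]
    ring
  rcases hf with rfl | rfl
  · have : Cmat A (q1 n) x = 0 := by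
      ext i j
      rw [hval]
      simp [index_ne, h2]
    rw [this]; exact Submodule.zero_mem _
  · have : Cmat A (q2 n) x = Acurve A x := by
      ext i j
      rw [hval]
      simp [index_ne, ehat_inj, hskew i j]
      ring
    rw [this]; exact Acurve_mem A x

/-! ### Curvature and its covariant derivatives on the slice -/

lemma commutator_mem {A : Fin N → Matrix (Fin n) (Fin n) ℝ}
    (hclosed : ∀ α β : Fin N, A α * A β - A β * A α ∈ Submodule.span ℝ (Set.range A))
    {X Y : Matrix (Fin n) (Fin n) ℝ} (hX : X ∈ Submodule.span ℝ (Set.range A))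
    (hY : Y ∈ Submodule.span ℝ (Set.range A)) :
    X * Y - Y * X ∈ Submodule.span ℝ (Set.range A) := by
  induction hX, hY using Submodule.span_induction₂ with
  | mem_mem X Y hX hY =>
    obtain ⟨α, rfl⟩ := hX
    obtain ⟨β, rfl⟩ := hY
    exact hclosed α β
  | zero_left => simp
  | zero_right => simp
  | add_left X Y Z _ _ _ h1 h2 =>
    convert Submodule.add_mem _ h1 h2 using 1
    noncomm_ring
  | add_right X Y Z _ _ _ h1 h2 =>
    convert Submodule.add_mem _ h1 h2 using 1
    noncomm_ring
  | smul_left r X Y _ _ h =>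
    convert Submodule.smul_mem _ r h using 1
    simp [smul_sub]
  | smul_right r X Y _ _ h =>
    convert Submodule.smul_mem _ r h using 1
    simp [smul_sub]

/-- A matrix-valued function which takes values in a subspace along the slice has its derivatives
in directions tangent to the slice in that subspace, since a finite-dimensional subspace is
closed. -/
lemma pd_mem (h : Submodule ℝ (Matrix (Fin n) (Fin n) ℝ)) {M : Fin n → Fin n → Pt n → ℝ}
    (hM : ∀ i j, ContDiff ℝ ∞ (M i j)) (hmem : ∀ x ∈ Slice n, (Matrix.of fun i j => M i j x) ∈ h)
    {f : Fin (n + 4)} (hf : ∀ i : Fin n, f ≠ ehat i) {x : Pt n} (hx : x ∈ Slice n) :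
    (Matrix.of fun i j => pd f (M i j) x) ∈ h := by
  have hcl : IsClosed (h : Set (Matrix (Fin n) (Fin n) ℝ)) := Submodule.closed_of_finiteDimensional h
  have hlim : Filter.Tendsto (fun t : ℝ => t⁻¹ •
      ((Matrix.of fun i j => M i j (x + t • Pi.single f 1)) - Matrix.of fun i j => M i j x))
      (nhdsWithin 0 {0}ᶜ) (nhds (Matrix.of fun i j => pd f (M i j) x)) := by
    refine tendsto_pi_nhds.2 fun i => tendsto_pi_nhds.2 fun j => ?_
    have hd : DifferentiableAt ℝ (M i j) x := (hM i j).differentiable (by simp) x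
    exact (hd.hasFDerivAt.hasLineDerivAt (Pi.single f 1)).tendsto_slope_zero
  refine hcl.mem_of_tendsto hlim (Filter.Eventually.of_forall fun t => ?_)
  exact h.smul_mem _ (h.sub_mem (hmem _ (slice_add hx hf t)) (hmem _ hx))

/-- On the slice, for `f` not a middle index, only middle indices contribute to a contraction
`Σ_e Γ^î_{f e} T^e`. -/
lemma sum_Γ_mul_T (A : Fin N → Matrix (Fin n) (Fin n) ℝ) {x : Pt n} (hx : x ∈ Slice n)
    {f : Fin (n + 4)} (hf : ∀ i : Fin n, f ≠ ehat i) (i : Fin n) (T : Fin (n + 4) → ℝ) :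
    ∑ e, Γchr A (ehat i) f e x * T e = ∑ k, Cmat A f x i k * T (ehat k) :=
  sum_eq_sum_ehat (fun e => Γchr A (ehat i) f e x * T e)
    fun e he => by simp [Γchr_outer_outer A hx _ hf he]

lemma sum_T_mul_Γ (A : Fin N → Matrix (Fin n) (Fin n) ℝ) {x : Pt n} (hx : x ∈ Slice n)
    {f : Fin (n + 4)} (hf : ∀ i : Fin n, f ≠ ehat i) (j : Fin n) (T : Fin (n + 4) → ℝ) :
    ∑ e, Γchr A e f (ehat j) x * T e = ∑ k, T (ehat k) * Cmat A f x k j := by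
  rw [sum_eq_sum_ehat (fun e => Γchr A e f (ehat j) x * T e)
    fun e he => by simp [Γchr_outer_upper A hx _ he hf]]
  exact Finset.sum_congr rfl fun k _ => mul_comm _ _

/-- All blocks `(R^î_{ĵ,n+3,n+4;…})` with derivative indices in `{n+3, n+4}` lie in the span on the
slice. There the curvature block is
`∂_{n+3} C_{n+4} - ∂_{n+4} C_{n+3} + [C_{n+3}, C_{n+4}]`, and each derivative in a direction
`f ∈ {n+3, n+4}` acts on the block as `∂_f + [C_f, ·]`. -/
lemma covRAux_mem (A : Fin N → Matrix (Fin n) (Fin n) ℝ) (hA : ∀ α, (A α)ᵀ = -A α)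
    (hclosed : ∀ α β : Fin N, A α * A β - A β * A α ∈ Submodule.span ℝ (Set.range A))
    (fs : List (Fin (n + 4))) (hfs : ∀ f ∈ fs, f = q1 n ∨ f = q2 n) :
    ∀ x ∈ Slice n, (Matrix.of fun i j : Fin n =>
      covRAux A (ehat i) (ehat j) (q1 n) (q2 n) fs x) ∈ Submodule.span ℝ (Set.range A) := by
  have hq1 := ne_ehat_of_q (n := n) (Or.inl rfl)
  have hq2 := ne_ehat_of_q (n := n) (Or.inr rfl)
  have hC : ∀ {f : Fin (n + 4)}, (f = q1 n ∨ f = q2 n) → ∀ x ∈ Slice n,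
      Cmat A f x ∈ Submodule.span ℝ (Set.range A) := fun hf x hx => Cmat_mem A hA hx hf
  induction fs with
  | nil =>
    intro x hx
    have key : (Matrix.of fun i j : Fin n =>
          covRAux A (ehat i) (ehat j) (q1 n) (q2 n) [] x) =
        (Matrix.of fun i j => pd (q1 n) (Γchr A (ehat i) (q2 n) (ehat j)) x)
        - (Matrix.of fun i j => pd (q2 n) (Γchr A (ehat i) (q1 n) (ehat j)) x)
        + (Cmat A (q1 n) x * Cmat A (q2 n) x - Cmat A (q2 n) x * Cmat A (q1 n) x) := by
      ext i j
      simp only [Matrix.of_apply, Matrix.add_apply, Matrix.sub_apply, Matrix.mul_apply]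
      rw [covRAux, Rcurv, Finset.sum_sub_distrib, sum_Γ_mul_T A hx hq1, sum_Γ_mul_T A hx hq2]
      rfl
    rw [key]
    exact Submodule.add_mem _ (Submodule.sub_mem _
      (pd_mem _ (fun i j => contDiff_Γchr A _ _ _) (hC (Or.inr rfl)) hq1 hx)
      (pd_mem _ (fun i j => contDiff_Γchr A _ _ _) (hC (Or.inl rfl)) hq2 hx))
      (commutator_mem hclosed (hC (Or.inl rfl) x hx) (hC (Or.inr rfl) x hx))
  | cons f fs ih =>
    intro x hx
    have hf := hfs f (by simp)
    have hfs' : ∀ g ∈ fs, g = q1 n ∨ g = q2 n := fun g hg => hfs g (by simp [hg])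
    have hne := ne_ehat_of_q hf
    have ih := ih hfs'
    set T : Matrix (Fin n) (Fin n) ℝ := Matrix.of fun i j : Fin n =>
      covRAux A (ehat i) (ehat j) (q1 n) (q2 n) fs x with hT
    have key : (Matrix.of fun i j : Fin n =>
          covRAux A (ehat i) (ehat j) (q1 n) (q2 n) (f :: fs) x) =
        (Matrix.of fun i j => pd f (covRAux A (ehat i) (ehat j) (q1 n) (q2 n) fs) x)
        + (Cmat A f x * T - T * Cmat A f x) := by
      ext i j
      simp only [Matrix.of_apply, Matrix.add_apply, Matrix.sub_apply, Matrix.mul_apply]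
      rw [covRAux, sum_Γ_mul_T A hx hne i
          (fun l => covRAux A l (ehat j) (q1 n) (q2 n) fs x),
        sum_T_mul_Γ A hx hne j (fun l => covRAux A (ehat i) l (q1 n) (q2 n) fs x)]
      have z : ∀ g l, (g = q1 n ∨ g = q2 n) → Γchr A l f g x = 0 := fun g l hg =>
        Γchr_outer_outer A hx l hne (ne_ehat_of_q hg)
      have z' : ∀ (s : Fin fs.length) l, Γchr A l f (fs.get s) x = 0 := fun s l =>
        z _ l (hfs' _ (List.get_mem fs s))
      simp only [z _ _ (Or.inl rfl), z _ _ (Or.inr rfl), z', zero_mul, Finset.sum_const_zero,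
        sub_zero, hT, Matrix.of_apply]
      ring
    rw [key]
    exact Submodule.add_mem _
      (pd_mem _ (fun i j => contDiff_covRAux A _ _ _ _ _ _ rfl) ih hne hx)
      (commutator_mem hclosed (hC hf x hx) (ih x hx))

end Proof

/-- If the span `h` of `A_1, …, A_N` is closed under commutators, then for all
`f_1, …, f_r ∈ {n+3, n+4}` the matrix `(R^î_{ĵ,n+3,n+4;f_1;…;f_r}(0))` belongs to `h`. -/
theorem statement19 (n N : ℕ) (hn : 1 ≤ n) (hN : 1 ≤ N)
    (A : Fin N → Matrix (Fin n) (Fin n) ℝ) (hA : ∀ α, (A α)ᵀ = -A α)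
    (hclosed : ∀ α β : Fin N,
      A α * A β - A β * A α ∈ Submodule.span ℝ (Set.range A)) :
    ∀ (fs : List (Fin (n + 4))), (∀ f ∈ fs, f = q1 n ∨ f = q2 n) →
      (Matrix.of fun i j : Fin n =>
          covR A (ehat i) (ehat j) (q1 n) (q2 n) fs (0 : Pt n))
        ∈ Submodule.span ℝ (Set.range A) := by
  intro fs hfs
  have h := covRAux_mem A hA hclosed fs.reverse (fun f hf => hfs f (List.mem_reverse.1 hf))
    0 (fun i => rfl)
  exact h

end
end HolPaper
end
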